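/- arXiv:math/9810161 — 2 statements merged into one kernel-verified Lean document; each statement's English description precedes it below -/
import Mathlib

section
/- Equivalence of the two forms of the GL_h(2)-covariant h-bosonic algebra: let Ã₁ := A₂ and Ã₂ := −A₁ + h A₂ (i.e. Ã = A·C with C = [[0, −1], [1, h]]). Then A⁺₁, A⁺₂, A₁, A₂ satisfy [A⁺₁, A⁺₂] = h (A⁺₁)², [A₁, A₂] = h A₂², [A₂, A⁺₁] = 0, [A₁, A⁺₂] = h(−A⁺₁A₁ − A⁺₂A₂ + h A⁺₁A₂), [A₁, A⁺₁] = [A₂, A⁺₂] = 1 + h A⁺₁A₂, if and only if A⁺₁, A⁺₂, Ã₁, Ã₂ satisfy [A⁺₁, A⁺₂] = h (A⁺₁)², [Ã₁, Ã₂] = h Ã₁², [Ã₁, A⁺₁] = 0, [Ã₂, A⁺₂] = h(1 − A⁺₁Ã₂ + A⁺₂Ã₁ + h A⁺₁Ã₁), and [Ã₁, A⁺₂] = −[Ã₂, A⁺₁] = 1 + h A⁺₁Ã₁. -/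
/-!
The commutator is bilinear, so replacing `a` by `-a + h • b` turns `⁅a, y⁆` into
`-⁅a, y⁆ + h • ⁅b, y⁆`, and the correction `⁅b, y⁆` is prescribed by a relation that both forms of
the algebra share.
-/

section NonassociativeCommutator

variable {k A : Type*} [NonUnitalNonAssocRing A] [DistribSMul k A] [IsScalarTower k A A]
  [SMulCommClass k A A] (h : k)

theorem neg_add_smul_lie (a b y : A) : ⁅-a + h • b, y⁆ = -⁅a, y⁆ + h • ⁅b, y⁆ := by
  simp only [Ring.lie_def, add_mul, mul_add, neg_mul, mul_neg, smul_mul_assoc, mul_smul_comm,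
    smul_sub]
  abel

theorem lie_neg_add_smul_self (a b : A) : ⁅b, -a + h • b⁆ = ⁅a, b⁆ := by
  simp only [Ring.lie_def, add_mul, mul_add, neg_mul, mul_neg, smul_mul_assoc, mul_smul_comm]
  abel

theorem neg_lie_neg_add_smul_of_lie_eq_zero {b x : A} (hbx : ⁅b, x⁆ = 0) (a : A) :
    -⁅-a + h • b, x⁆ = ⁅a, x⁆ := by
  rw [neg_add_smul_lie, hbx, smul_zero, add_zero, neg_neg]

variable {h} in
theorem lie_neg_add_smul_eq_iff {b c x y : A} (hby : ⁅b, y⁆ = c + h • (x * b)) (a : A) :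
    ⁅-a + h • b, y⁆ = h • (c - x * (-a + h • b) + y * b + h • (x * b)) ↔
      ⁅a, y⁆ = h • (-(x * a) - y * b + h • (x * b)) := by
  have rhs_eq : c - x * (-a + h • b) + y * b + h • (x * b) =
      c + h • (x * b) - (-(x * a) - y * b + h • (x * b)) := by
    rw [mul_add, mul_neg, mul_smul_comm]
    abel
  rw [neg_add_smul_lie, hby, rhs_eq, smul_sub, neg_add_eq_sub, sub_right_inj]

theorem h_bosonic_two_forms_equiv_general (c x₁ x₂ a₁ a₂ : A) :
    (⁅x₁, x₂⁆ = h • (x₁ * x₁) ∧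
     ⁅a₁, a₂⁆ = h • (a₂ * a₂) ∧
     ⁅a₂, x₁⁆ = 0 ∧
     ⁅a₁, x₂⁆ = h • (-(x₁ * a₁) - x₂ * a₂ + h • (x₁ * a₂)) ∧
     ⁅a₁, x₁⁆ = c + h • (x₁ * a₂) ∧
     ⁅a₂, x₂⁆ = c + h • (x₁ * a₂))
    ↔
    (let b₁ := a₂
     let b₂ := -a₁ + h • a₂
     ⁅x₁, x₂⁆ = h • (x₁ * x₁) ∧
     ⁅b₁, b₂⁆ = h • (b₁ * b₁) ∧
     ⁅b₁, x₁⁆ = 0 ∧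
     ⁅b₂, x₂⁆ = h • (c - x₁ * b₂ + x₂ * b₁ + h • (x₁ * b₁)) ∧
     ⁅b₁, x₂⁆ = c + h • (x₁ * b₁) ∧
     -⁅b₂, x₁⁆ = c + h • (x₁ * b₁)) := by
  dsimp only
  rw [lie_neg_add_smul_self]
  constructor
  · rintro ⟨hx, ha, ha₂x₁, ha₁x₂, ha₁x₁, ha₂x₂⟩
    exact ⟨hx, ha, ha₂x₁, (lie_neg_add_smul_eq_iff ha₂x₂ a₁).2 ha₁x₂, ha₂x₂,
      (neg_lie_neg_add_smul_of_lie_eq_zero h ha₂x₁ a₁).trans ha₁x₁⟩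
  · rintro ⟨hx, ha, ha₂x₁, hb₂x₂, ha₂x₂, hb₂x₁⟩
    exact ⟨hx, ha, ha₂x₁, (lie_neg_add_smul_eq_iff ha₂x₂ a₁).1 hb₂x₂,
      (neg_lie_neg_add_smul_of_lie_eq_zero h ha₂x₁ a₁).symm.trans hb₂x₁, ha₂x₂⟩

end NonassociativeCommutator

/-- Equivalence of the two forms of the GL_h(2)-covariant h-bosonic algebra.  With
`Ã₁ := A₂` and `Ã₂ := −A₁ + h A₂` (i.e. `Ã = A·C` with `C = [[0,−1],[1,h]]`),
the relations
`[A⁺₁,A⁺₂] = h (A⁺₁)²`, `[A₁,A₂] = h A₂²`, `[A₂,A⁺₁] = 0`,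
`[A₁,A⁺₂] = h(−A⁺₁A₁ − A⁺₂A₂ + h A⁺₁A₂)`, `[A₁,A⁺₁] = [A₂,A⁺₂] = 1 + h A⁺₁A₂`
hold if and only if
`[A⁺₁,A⁺₂] = h (A⁺₁)²`, `[Ã₁,Ã₂] = h Ã₁²`, `[Ã₁,A⁺₁] = 0`,
`[Ã₂,A⁺₂] = h(1 − A⁺₁Ã₂ + A⁺₂Ã₁ + h A⁺₁Ã₁)`,
`[Ã₁,A⁺₂] = −[Ã₂,A⁺₁] = 1 + h A⁺₁Ã₁` hold. -/
theorem h_bosonic_two_forms_equiv (k : Type*) [CommRing k]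
    (𝒜 : Type*) [Ring 𝒜] [Algebra k 𝒜] (h : k) (Ap1 Ap2 A1 A2 : 𝒜) :
    (Ap1 * Ap2 - Ap2 * Ap1 = h • (Ap1 * Ap1) ∧
     A1 * A2 - A2 * A1 = h • (A2 * A2) ∧
     A2 * Ap1 - Ap1 * A2 = 0 ∧
     A1 * Ap2 - Ap2 * A1 = h • (-(Ap1 * A1) - Ap2 * A2 + h • (Ap1 * A2)) ∧
     A1 * Ap1 - Ap1 * A1 = 1 + h • (Ap1 * A2) ∧
     A2 * Ap2 - Ap2 * A2 = 1 + h • (Ap1 * A2))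
    ↔
    (let At1 := A2
     let At2 := -A1 + h • A2
     Ap1 * Ap2 - Ap2 * Ap1 = h • (Ap1 * Ap1) ∧
     At1 * At2 - At2 * At1 = h • (At1 * At1) ∧
     At1 * Ap1 - Ap1 * At1 = 0 ∧
     At2 * Ap2 - Ap2 * At2 = h • (1 - Ap1 * At2 + Ap2 * At1 + h • (Ap1 * At1)) ∧
     At1 * Ap2 - Ap2 * At1 = 1 + h • (Ap1 * At1) ∧
     -(At2 * Ap1 - Ap1 * At2) = 1 + h • (Ap1 * At1)) := by
  exact h_bosonic_two_forms_equiv_general h 1 Ap1 Ap2 A1 A2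
end

section
/- Aizawa's bosonic realization satisfies the GL_h(2)-covariant h-bosonic algebra: the linear endomorphisms A⁺₁ = B ∘ a⁺₁, A⁺₂ = K ∘ a⁺₂ + (h/2)(A⁺₁ − 2 a⁺₁ ∘ J₀), Ã₁ = B ∘ a₂, Ã₂ = −K ∘ a₁ + (h/2)(Ã₁ − 2 a₂ ∘ J₀) of ℝ[X₁, X₂] satisfy [A⁺₁, A⁺₂] = h (A⁺₁)², [Ã₁, Ã₂] = h Ã₁², [Ã₁, A⁺₁] = 0, [Ã₂, A⁺₂] = h(1 − A⁺₁Ã₂ + A⁺₂Ã₁ + h A⁺₁Ã₁), and [Ã₁, A⁺₂] = −[Ã₂, A⁺₁] = 1 + h A⁺₁Ã₁, where 1 denotes the identity endomorphism. -/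
/-- The creation operator `a⁺_i`: multiplication by `X_i` on `ℝ[X₁,X₂]`. -/
noncomputable def aplus (i : Fin 2) : Module.End ℝ (MvPolynomial (Fin 2) ℝ) :=
  LinearMap.mulLeft ℝ (MvPolynomial.X i)

/-- The annihilation operator `a_i`: the partial derivative `∂/∂X_i` on `ℝ[X₁,X₂]`. -/
noncomputable def aop (i : Fin 2) : Module.End ℝ (MvPolynomial (Fin 2) ℝ) :=
  (MvPolynomial.pderiv i).toLinearMap

/-- `J₊ = a⁺₁ ∘ a₂` (0-based indices). -/
noncomputable def Jplus : Module.End ℝ (MvPolynomial (Fin 2) ℝ) :=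
  aplus 0 * aop 1

/-- `J₀ = (1/2)(a⁺₁ ∘ a₁ − a⁺₂ ∘ a₂)` (0-based indices). -/
noncomputable def Jzero : Module.End ℝ (MvPolynomial (Fin 2) ℝ) :=
  (1 / 2 : ℝ) • (aplus 0 * aop 0 - aplus 1 * aop 1)

/-- `K = 1 − (h/2) J₊`. -/
noncomputable def K (h : ℝ) : Module.End ℝ (MvPolynomial (Fin 2) ℝ) :=
  1 - (h / 2) • Jplus

/-!
Put `c = h / 2`. The substitution `(a⁺₁, a⁺₂, a₁, a₂) ↦ (a₂, -a₁, -a⁺₂, a⁺₁)` preserves both the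
canonical commutation relations and `K`, and it exchanges `A⁺ᵢ` with `Ãᵢ`, so each relation is
needed only up to this duality. Normal ordering gives `A⁺₂ = a⁺₂ - c a⁺₁ a₁ a⁺₁ + c A⁺₁`. Because
`c a⁺₁ a₂ = 1 - K`, one finds `[K⁻¹, a⁺₂] = c K⁻² a⁺₁`, hence `[A⁺₁, a⁺₂] = c (A⁺₁)²` and
`[Ã₁, a⁺₂] = K⁻²`; these and their duals yield every relation except the one for `[Ã₂, A⁺₂]`. There
the contributions of `K⁻¹` cancel, and both sides equal `h (a⁺₁ a₁ + a₂ a⁺₂)`.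
-/

section Commutator

variable {R : Type*} [Ring R]

theorem lie_mul_eq_add (a b c : R) : ⁅a, b * c⁆ = ⁅a, b⁆ * c + b * ⁅a, c⁆ := by
  simp only [Ring.lie_def]
  noncomm_ring

theorem mul_lie_eq_add (a b c : R) : ⁅a * b, c⁆ = a * ⁅b, c⁆ + ⁅a, c⁆ * b := by
  simp only [Ring.lie_def]
  noncomm_ring

theorem lie_conj_of_commute {a b x : R} (hax : Commute a x) :
    ⁅a, x * b * x⁆ = x * ⁅a, b⁆ * x := by
  rw [lie_mul_eq_add, lie_mul_eq_add, hax.lie_eq, zero_mul, zero_add, mul_zero, add_zero]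

theorem units_inv_lie (u : Rˣ) (a : R) : ⁅(↑u⁻¹ : R), a⁆ = ↑u⁻¹ * ⁅a, ↑u⁆ * ↑u⁻¹ := by
  simp only [Ring.lie_def, mul_sub, sub_mul, mul_assoc, Units.mul_inv, mul_one,
    Units.inv_mul_cancel_left]

end Commutator

/-- The operator `K⁻¹ x`: for `x = a⁺₁` it is `A⁺₁`, for `x = a₂` it is `Ã₁`. -/
def hBoson₁ {R : Type*} [Monoid R] (K : Rˣ) (x : R) : R :=
  ↑K⁻¹ * x

section UnitInverse

variable {k R : Type*} [CommRing k] [Ring R] [Algebra k R] {c : k} {x q : R} {K : Rˣ}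

theorem unit_eq_swap (hqx : Commute q x) (hK : (K : R) = 1 - c • (x * q)) :
    (K : R) = 1 - c • (q * x) := by
  rw [hK, hqx.eq]

theorem commute_unit_inv (hqx : Commute q x) (hK : (K : R) = 1 - c • (x * q)) :
    Commute (↑K⁻¹ : R) x := by
  refine Commute.units_inv_left ?_
  rw [hK]
  exact (Commute.one_left x).sub_left (((Commute.refl x).mul_left hqx).smul_left c)

theorem commute_hBoson₁_self (hqx : Commute q x) (hK : (K : R) = 1 - c • (x * q)) :
    Commute (hBoson₁ K x) x :=
  (commute_unit_inv hqx hK).mul_left (Commute.refl x)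

theorem commute_hBoson₁_partner (hqx : Commute q x) (hK : (K : R) = 1 - c • (x * q)) :
    Commute (hBoson₁ K x) q :=
  (commute_unit_inv hqx.symm (unit_eq_swap hqx hK)).mul_left hqx.symm

theorem commute_hBoson₁_hBoson₁ (hqx : Commute q x) (hK : (K : R) = 1 - c • (x * q)) :
    Commute (hBoson₁ K x) (hBoson₁ K q) :=
  ((Commute.refl _).mul_left (commute_unit_inv hqx hK).symm).mul_right
    (commute_hBoson₁_partner hqx hK)

theorem smul_hBoson₁_mul_partner (hK : (K : R) = 1 - c • (x * q)) :
    c • (hBoson₁ K x * q) = ↑K⁻¹ - 1 := by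
  have hxq : c • (x * q) = 1 - (K : R) := by rw [hK, sub_sub_cancel]
  rw [hBoson₁, mul_assoc, ← mul_smul_comm, hxq, mul_sub, mul_one, Units.inv_mul]

theorem smul_mul_hBoson₁_partner (hqx : Commute q x) (hK : (K : R) = 1 - c • (x * q)) :
    c • (x * hBoson₁ K q) = ↑K⁻¹ - 1 := by
  rw [← smul_hBoson₁_mul_partner hK, hBoson₁, hBoson₁, ← mul_assoc, (commute_unit_inv hqx hK).eq]

theorem smul_hBoson₁_mul_hBoson₁ (hqx : Commute q x) (hK : (K : R) = 1 - c • (x * q)) :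
    c • (hBoson₁ K x * hBoson₁ K q) = (↑K⁻¹ : R) ^ 2 - ↑K⁻¹ := by
  rw [hBoson₁, mul_assoc, ← mul_smul_comm, smul_mul_hBoson₁_partner hqx hK, mul_sub, mul_one, sq]

theorem hBoson₁_sq (hqx : Commute q x) (hK : (K : R) = 1 - c • (x * q)) :
    hBoson₁ K x ^ 2 = x * (↑K⁻¹ : R) ^ 2 * x := by
  rw [hBoson₁, (commute_unit_inv hqx hK).mul_pow, sq x, ← mul_assoc,
    ((commute_unit_inv hqx hK).pow_left 2).eq]

end UnitInverse

/-- The canonical commutation relations of two independent bosonic modes, with creation operators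
`x = a⁺₁`, `y = a⁺₂` and annihilation operators `p = a₁`, `q = a₂`. -/
structure TwoModeCCR {R : Type*} [Ring R] (x y p q : R) : Prop where
  commute_xy : Commute x y
  commute_pq : Commute p q
  commute_py : Commute p y
  commute_qx : Commute q x
  lie_px : ⁅p, x⁆ = 1
  lie_qy : ⁅q, y⁆ = 1

/-- The part `y - c x p x` of the second `h`-boson that does not involve `K⁻¹`, with `c = h / 2`. -/
def shearedBoson {k R : Type*} [CommRing k] [Ring R] [Algebra k R] (c : k) (x y p : R) : R :=
  y - c • (x * p * x)

/-- The second `h`-boson in normal form, with `c = h / 2`: for `(x, y, p) = (a⁺₁, a⁺₂, a₁)` it is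
`A⁺₂`, for `(x, y, p) = (a₂, -a₁, -a⁺₂)` it is `Ã₂`. -/
def hBoson₂ {k R : Type*} [CommRing k] [Ring R] [Algebra k R] (c : k) (K : Rˣ) (x y p : R) : R :=
  shearedBoson c x y p + c • hBoson₁ K x

namespace TwoModeCCR

attribute [local instance] LieRing.ofAssociativeRing

variable {k R : Type*} [CommRing k] [Ring R] [Algebra k R] {c : k} {x y p q : R} {K : Rˣ}

theorem dual (H : TwoModeCCR x y p q) : TwoModeCCR q (-p) (-y) x where
  commute_xy := H.commute_pq.symm.neg_right
  commute_pq := H.commute_xy.symm.neg_left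
  commute_py := H.commute_py.symm.neg_left.neg_right
  commute_qx := H.commute_qx.symm
  lie_px := by rw [neg_lie, lie_skew, H.lie_qy]
  lie_qy := by rw [lie_neg, lie_skew, H.lie_px]

theorem p_mul_x (H : TwoModeCCR x y p q) : p * x = x * p + 1 := by
  rw [← H.lie_px, Ring.lie_def, add_sub_cancel]

theorem y_mul_q (H : TwoModeCCR x y p q) : y * q = q * y - 1 := by
  rw [← H.lie_qy, Ring.lie_def, sub_sub_cancel]

theorem inv_lie_y (H : TwoModeCCR x y p q) (hK : (K : R) = 1 - c • (x * q)) :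
    ⁅(↑K⁻¹ : R), y⁆ = c • (↑K⁻¹ * hBoson₁ K x) := by
  have hyK : ⁅y, (K : R)⁆ = c • x := by
    rw [hK, lie_sub, (Commute.one_right y).lie_eq, LieAlgebra.lie_smul, lie_mul_eq_add,
      H.commute_xy.symm.lie_eq, ← lie_skew y q, H.lie_qy]
    simp only [zero_mul, mul_neg, mul_one, zero_add, smul_neg, zero_sub, neg_neg]
  rw [units_inv_lie, hyK, mul_smul_comm, smul_mul_assoc, mul_assoc,
    ← (commute_unit_inv H.commute_qx hK).eq, hBoson₁]

theorem hBoson₁_lie_y (H : TwoModeCCR x y p q) (hK : (K : R) = 1 - c • (x * q)) :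
    ⁅hBoson₁ K x, y⁆ = c • hBoson₁ K x ^ 2 := by
  calc ⁅hBoson₁ K x, y⁆ = ⁅(↑K⁻¹ : R), y⁆ * x := by
        rw [hBoson₁, mul_lie_eq_add, H.commute_xy.lie_eq, mul_zero, zero_add]
    _ = c • (↑K⁻¹ * x * hBoson₁ K x) := by
        rw [H.inv_lie_y hK, smul_mul_assoc, mul_assoc,
          (commute_hBoson₁_self H.commute_qx hK).eq, mul_assoc]
    _ = c • hBoson₁ K x ^ 2 := by rw [sq, hBoson₁]

theorem hBoson₁_q_lie_p (H : TwoModeCCR x y p q) (hK : (K : R) = 1 - c • (x * q)) :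
    ⁅hBoson₁ K q, p⁆ = -(c • hBoson₁ K q ^ 2) := by
  rw [← H.dual.hBoson₁_lie_y (unit_eq_swap H.commute_qx hK), lie_neg, neg_neg]

theorem hBoson₁_q_lie_y (H : TwoModeCCR x y p q) (hK : (K : R) = 1 - c • (x * q)) :
    ⁅hBoson₁ K q, y⁆ = (↑K⁻¹ : R) ^ 2 := by
  have hinv : ⁅(↑K⁻¹ : R), y⁆ * q = (↑K⁻¹ : R) ^ 2 - ↑K⁻¹ := by
    rw [H.inv_lie_y hK, smul_mul_assoc, mul_assoc, ← mul_smul_comm, smul_hBoson₁_mul_partner hK,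
      mul_sub, mul_one, sq]
  rw [hBoson₁, mul_lie_eq_add, H.lie_qy, hinv, mul_one, add_sub_cancel]

theorem hBoson₁_lie_p (H : TwoModeCCR x y p q) (hK : (K : R) = 1 - c • (x * q)) :
    ⁅hBoson₁ K x, p⁆ = -(↑K⁻¹ : R) ^ 2 := by
  rw [← H.dual.hBoson₁_q_lie_y (unit_eq_swap H.commute_qx hK), lie_neg, neg_neg]

theorem hBoson₁_lie_shearedBoson (H : TwoModeCCR x y p q) (hK : (K : R) = 1 - c • (x * q)) :
    ⁅hBoson₁ K x, shearedBoson c x y p⁆ = (2 * c) • hBoson₁ K x ^ 2 := by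
  have hconj : ⁅hBoson₁ K x, x * p * x⁆ = -hBoson₁ K x ^ 2 := by
    rw [lie_conj_of_commute (commute_hBoson₁_self H.commute_qx hK), H.hBoson₁_lie_p hK, mul_neg,
      neg_mul, hBoson₁_sq H.commute_qx hK]
  rw [shearedBoson, lie_sub, LieAlgebra.lie_smul, hconj, H.hBoson₁_lie_y hK]
  module

theorem hBoson₁_q_lie_shearedBoson (H : TwoModeCCR x y p q) (hK : (K : R) = 1 - c • (x * q)) :
    ⁅hBoson₁ K q, shearedBoson c x y p⁆ = 1 + (2 * c) • (hBoson₁ K x * hBoson₁ K q) := by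
  have hqx : Commute (hBoson₁ K q) x :=
    commute_hBoson₁_partner H.dual.commute_qx (unit_eq_swap H.commute_qx hK)
  have hconj : c • ⁅hBoson₁ K q, x * p * x⁆ = -((↑K⁻¹ : R) - 1) ^ 2 := by
    calc c • ⁅hBoson₁ K q, x * p * x⁆
        = -((c • (x * hBoson₁ K q)) * (c • (hBoson₁ K q * x))) := by
          rw [lie_conj_of_commute hqx, H.hBoson₁_q_lie_p hK]
          simp only [mul_neg, neg_mul, smul_neg, mul_smul_comm, smul_mul_assoc, sq, mul_assoc]
      _ = -((↑K⁻¹ : R) - 1) ^ 2 := by rw [hqx.eq, smul_mul_hBoson₁_partner H.commute_qx hK, sq]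
  rw [shearedBoson, lie_sub, LieAlgebra.lie_smul, hconj, H.hBoson₁_q_lie_y hK, mul_smul,
    smul_hBoson₁_mul_hBoson₁ H.commute_qx hK, two_smul]
  noncomm_ring

theorem hBoson₁_lie_hBoson₂ (H : TwoModeCCR x y p q) (hK : (K : R) = 1 - c • (x * q)) :
    ⁅hBoson₁ K x, hBoson₂ c K x y p⁆ = (2 * c) • hBoson₁ K x ^ 2 := by
  rw [hBoson₂, lie_add, LieAlgebra.lie_smul, lie_self, smul_zero, add_zero,
    H.hBoson₁_lie_shearedBoson hK]

theorem hBoson₁_q_lie_hBoson₂ (H : TwoModeCCR x y p q) (hK : (K : R) = 1 - c • (x * q)) :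
    ⁅hBoson₁ K q, hBoson₂ c K x y p⁆ = 1 + (2 * c) • (hBoson₁ K x * hBoson₁ K q) := by
  rw [hBoson₂, lie_add, LieAlgebra.lie_smul,
    (commute_hBoson₁_hBoson₁ H.commute_qx hK).symm.lie_eq, smul_zero, add_zero,
    H.hBoson₁_q_lie_shearedBoson hK]

theorem hBoson₁_lie_dual_shearedBoson (H : TwoModeCCR x y p q) (hK : (K : R) = 1 - c • (x * q)) :
    ⁅hBoson₁ K x, shearedBoson c q (-p) (-y)⁆ = 1 + (2 * c) • (hBoson₁ K x * hBoson₁ K q) := by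
  rw [H.dual.hBoson₁_q_lie_shearedBoson (unit_eq_swap H.commute_qx hK),
    (commute_hBoson₁_hBoson₁ H.commute_qx hK).eq]

theorem neg_dual_hBoson₂_lie_hBoson₁ (H : TwoModeCCR x y p q)
    (hK : (K : R) = 1 - c • (x * q)) :
    -⁅hBoson₂ c K q (-p) (-y), hBoson₁ K x⁆ = 1 + (2 * c) • (hBoson₁ K x * hBoson₁ K q) := by
  rw [lie_skew, H.dual.hBoson₁_q_lie_hBoson₂ (unit_eq_swap H.commute_qx hK),
    (commute_hBoson₁_hBoson₁ H.commute_qx hK).eq]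

theorem dual_shearedBoson_lie_shearedBoson (H : TwoModeCCR x y p q) :
    ⁅shearedBoson c q (-p) (-y), shearedBoson c x y p⁆ = (2 * c) • (x * p + q * y) := by
  have hpy : ⁅p, y⁆ = 0 := H.commute_py.lie_eq
  have hp : ⁅p, x * p * x⁆ = 2 * (x * p) + 1 := by
    rw [lie_mul_eq_add, lie_mul_eq_add, H.lie_px, lie_self, mul_zero, add_zero, one_mul, mul_one,
      H.p_mul_x]
    noncomm_ring
  have hy : ⁅q * y * q, y⁆ = 2 * (q * y) - 1 := by
    rw [mul_lie_eq_add, mul_lie_eq_add, H.lie_qy, lie_self, mul_zero, zero_add, one_mul, mul_one,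
      H.y_mul_q]
    noncomm_ring
  have hqyq : ⁅q * y * q, x * p * x⁆ = 0 := by
    have hq_comm : Commute q (x * p * x) :=
      (H.commute_qx.mul_right H.commute_pq.symm).mul_right H.commute_qx
    have hy_comm : Commute y (x * p * x) :=
      (H.commute_xy.symm.mul_right H.commute_py.symm).mul_right H.commute_xy.symm
    exact ((hq_comm.mul_left hy_comm).mul_left hq_comm).lie_eq
  simp only [shearedBoson, mul_neg, neg_mul, smul_neg, sub_neg_eq_add, add_lie, neg_lie, lie_sub,
    LieAlgebra.lie_smul, smul_lie, hpy, hp, hy, hqyq, two_mul]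
  module

theorem dual_hBoson₂_lie_hBoson₂_eq (H : TwoModeCCR x y p q) (hK : (K : R) = 1 - c • (x * q)) :
    ⁅hBoson₂ c K q (-p) (-y), hBoson₂ c K x y p⁆ = (2 * c) • (x * p + q * y) := by
  have hsheared : ⁅shearedBoson c q (-p) (-y), hBoson₁ K x⁆ =
      -(1 + (2 * c) • (hBoson₁ K x * hBoson₁ K q)) := by
    rw [← lie_skew, H.hBoson₁_lie_dual_shearedBoson hK]
  simp only [hBoson₂, add_lie, lie_add, LieAlgebra.lie_smul, smul_lie, hsheared,
    H.dual_shearedBoson_lie_shearedBoson, H.hBoson₁_q_lie_shearedBoson hK,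
    (commute_hBoson₁_hBoson₁ H.commute_qx hK).symm.lie_eq]
  module

theorem hBoson₁_mul_p (H : TwoModeCCR x y p q) (hK : (K : R) = 1 - c • (x * q)) :
    hBoson₁ K x * p = x * p * ↑K⁻¹ + ↑K⁻¹ - (↑K⁻¹ : R) ^ 2 := by
  have hlie : hBoson₁ K x * p - p * x * ↑K⁻¹ = -(↑K⁻¹ : R) ^ 2 := by
    rw [← H.hBoson₁_lie_p hK, Ring.lie_def, mul_assoc p,
      ← (commute_unit_inv H.commute_qx hK).eq, hBoson₁]
  rw [← sub_add_cancel (hBoson₁ K x * p) (p * x * ↑K⁻¹), hlie, H.p_mul_x]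
  noncomm_ring

theorem y_mul_hBoson₁ (H : TwoModeCCR x y p q) (hK : (K : R) = 1 - c • (x * q)) :
    y * hBoson₁ K q = ↑K⁻¹ * (q * y) - (↑K⁻¹ : R) ^ 2 := by
  rw [← H.hBoson₁_q_lie_y hK, Ring.lie_def, hBoson₁, mul_assoc, sub_sub_cancel]

theorem hBoson₁_mul_dual_shearedBoson (H : TwoModeCCR x y p q)
    (hK : (K : R) = 1 - c • (x * q)) :
    hBoson₁ K x * shearedBoson c q (-p) (-y) =
      (↑K⁻¹ : R) ^ 2 - 2 * ↑K⁻¹ + 1 - x * p * ↑K⁻¹ + (↑K⁻¹ - 1) * (q * y) := by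
  calc hBoson₁ K x * shearedBoson c q (-p) (-y)
      = -(hBoson₁ K x * p) + c • (hBoson₁ K x * q) * (y * q) := by
        simp only [shearedBoson, mul_neg, neg_mul, smul_neg, sub_neg_eq_add, mul_add,
          mul_smul_comm, smul_mul_assoc, mul_assoc]
    _ = _ := by
        rw [H.hBoson₁_mul_p hK, smul_hBoson₁_mul_partner hK, H.y_mul_q]
        noncomm_ring

theorem shearedBoson_mul_hBoson₁ (H : TwoModeCCR x y p q) (hK : (K : R) = 1 - c • (x * q)) :
    shearedBoson c x y p * hBoson₁ K q =
      ↑K⁻¹ * (q * y) - (↑K⁻¹ : R) ^ 2 - x * p * (↑K⁻¹ - 1) := by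
  rw [← smul_mul_hBoson₁_partner H.commute_qx hK, ← H.y_mul_hBoson₁ hK, shearedBoson, sub_mul,
    smul_mul_assoc, mul_smul_comm, mul_assoc (x * p)]

theorem hBoson₂_mul_sub_hBoson₁_mul (H : TwoModeCCR x y p q) (hK : (K : R) = 1 - c • (x * q)) :
    1 - hBoson₁ K x * hBoson₂ c K q (-p) (-y) + hBoson₂ c K x y p * hBoson₁ K q +
      (2 * c) • (hBoson₁ K x * hBoson₁ K q) = x * p + q * y := by
  rw [hBoson₂, hBoson₂, mul_add, add_mul, mul_smul_comm, smul_mul_assoc, mul_smul, two_smul,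
    smul_hBoson₁_mul_hBoson₁ H.commute_qx hK, H.hBoson₁_mul_dual_shearedBoson hK,
    H.shearedBoson_mul_hBoson₁ hK]
  noncomm_ring

theorem dual_hBoson₂_lie_hBoson₂ (H : TwoModeCCR x y p q) (hK : (K : R) = 1 - c • (x * q)) :
    ⁅hBoson₂ c K q (-p) (-y), hBoson₂ c K x y p⁆ =
      (2 * c) • (1 - hBoson₁ K x * hBoson₂ c K q (-p) (-y) + hBoson₂ c K x y p * hBoson₁ K q +
        (2 * c) • (hBoson₁ K x * hBoson₁ K q)) := by
  rw [H.dual_hBoson₂_lie_hBoson₂_eq hK, H.hBoson₂_mul_sub_hBoson₁_mul hK]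

theorem hBoson₂_eq (H : TwoModeCCR x y p q) (hK : (K : R) = 1 - c • (x * q)) :
    ↑K * y + c • (↑K⁻¹ * x - x * (x * p - y * q)) = hBoson₂ c K x y p := by
  rw [hBoson₂, shearedBoson, hBoson₁, hK, mul_assoc x p x, H.p_mul_x, H.y_mul_q]
  simp only [sub_mul, one_mul, smul_mul_assoc, mul_assoc, mul_sub, mul_add, mul_one]
  module

theorem dual_hBoson₂_eq (H : TwoModeCCR x y p q) (hK : (K : R) = 1 - c • (x * q)) :
    -(↑K * p) + c • (↑K⁻¹ * q - q * (x * p - y * q)) = hBoson₂ c K q (-p) (-y) := by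
  have hself_dual : q * -y - -p * x = x * p - y * q := by
    rw [neg_mul, H.p_mul_x, H.y_mul_q]
    noncomm_ring
  rw [← H.dual.hBoson₂_eq (unit_eq_swap H.commute_qx hK), hself_dual, mul_neg]

end TwoModeCCR

section Polynomial

theorem derivation_mul_mulLeft {k A : Type*} [CommSemiring k] [CommSemiring A] [Algebra k A]
    (D : Derivation k A A) (a : A) :
    (D : A →ₗ[k] A) * LinearMap.mulLeft k a =
      LinearMap.mulLeft k a * (D : A →ₗ[k] A) + LinearMap.mulLeft k (D a) := by
  ext b
  simp [mul_comm b]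

variable {k : Type*} [CommRing k]

theorem commute_pderiv {σ : Type*} (i j : σ) :
    Commute (MvPolynomial.pderiv (R := k) i).toLinearMap
      (MvPolynomial.pderiv (R := k) j).toLinearMap := by
  classical
  have hlie : ⁅MvPolynomial.pderiv (R := k) i, MvPolynomial.pderiv (R := k) j⁆ = 0 := by
    refine MvPolynomial.derivation_ext fun l => ?_
    simp [Derivation.commutator_apply, MvPolynomial.pderiv_X, Pi.single_apply, apply_ite]
  refine LinearMap.ext fun f => sub_eq_zero.mp ?_
  exact DFunLike.congr_fun hlie f

theorem twoModeCCR_mulLeft_X_pderiv {σ : Type*} {i j : σ} (hij : i ≠ j) :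
    TwoModeCCR (LinearMap.mulLeft k (MvPolynomial.X i : MvPolynomial σ k))
      (LinearMap.mulLeft k (MvPolynomial.X j))
      (MvPolynomial.pderiv i).toLinearMap (MvPolynomial.pderiv j).toLinearMap where
  commute_xy := LinearMap.ext fun f => mul_left_comm _ _ f
  commute_pq := commute_pderiv i j
  commute_py := by
    refine (derivation_mul_mulLeft _ _).trans ?_
    rw [MvPolynomial.pderiv_X_of_ne hij.symm, LinearMap.mulLeft_zero_eq_zero, add_zero]
  commute_qx := by
    refine (derivation_mul_mulLeft _ _).trans ?_
    rw [MvPolynomial.pderiv_X_of_ne hij, LinearMap.mulLeft_zero_eq_zero, add_zero]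
  lie_px := by
    refine sub_eq_of_eq_add' ((derivation_mul_mulLeft _ _).trans ?_)
    rw [MvPolynomial.pderiv_X_self, LinearMap.mulLeft_one]
    rfl
  lie_qy := by
    refine sub_eq_of_eq_add' ((derivation_mul_mulLeft _ _).trans ?_)
    rw [MvPolynomial.pderiv_X_self, LinearMap.mulLeft_one]
    rfl

theorem twoModeCCR_aplus_aop : TwoModeCCR (aplus 0) (aplus 1) (aop 0) (aop 1) :=
  twoModeCCR_mulLeft_X_pderiv Fin.zero_ne_one

theorem two_smul_mul_Jzero (a : Module.End ℝ (MvPolynomial (Fin 2) ℝ)) :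
    (2 : ℝ) • (a * Jzero) = a * (aplus 0 * aop 0 - aplus 1 * aop 1) := by
  rw [Jzero, mul_smul_comm, smul_smul, mul_one_div_cancel two_ne_zero, one_smul]

end Polynomial

theorem aizawa_realization_h_bosonic_general {k R : Type*} [CommRing k] [Ring R] [Algebra k R]
    {h c : k} {x y p q : R} {K : Rˣ} (hc : h = 2 * c) (H : TwoModeCCR x y p q)
    (hK : (K : R) = 1 - c • (x * q)) :
    let Ap1 : R := ↑K⁻¹ * x
    let Ap2 : R := ↑K * y + c • (Ap1 - x * (x * p - y * q))
    let At1 : R := ↑K⁻¹ * q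
    let At2 : R := -(↑K * p) + c • (At1 - q * (x * p - y * q))
    ⁅Ap1, Ap2⁆ = h • (Ap1 * Ap1) ∧
    ⁅At1, At2⁆ = h • (At1 * At1) ∧
    ⁅At1, Ap1⁆ = 0 ∧
    ⁅At2, Ap2⁆ = h • (1 - Ap1 * At2 + Ap2 * At1 + h • (Ap1 * At1)) ∧
    ⁅At1, Ap2⁆ = 1 + h • (Ap1 * At1) ∧
    -⁅At2, Ap1⁆ = 1 + h • (Ap1 * At1) := by
  intro Ap1 Ap2 At1 At2
  have hAp2 : Ap2 = hBoson₂ c K x y p := H.hBoson₂_eq hK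
  have hAt2 : At2 = hBoson₂ c K q (-p) (-y) := H.dual_hBoson₂_eq hK
  rw [hAp2, hAt2, hc, ← sq, ← sq]
  exact ⟨H.hBoson₁_lie_hBoson₂ hK, H.dual.hBoson₁_lie_hBoson₂ (unit_eq_swap H.commute_qx hK),
    (commute_hBoson₁_hBoson₁ H.commute_qx hK).symm.lie_eq, H.dual_hBoson₂_lie_hBoson₂ hK,
    H.hBoson₁_q_lie_hBoson₂ hK, H.neg_dual_hBoson₂_lie_hBoson₁ hK⟩

/-- Aizawa's bosonic realization satisfies the GL_h(2)-covariant h-bosonic algebra: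
with `B` a two-sided inverse of `K = 1 − (h/2) J₊` the operators
`A⁺₁ = B ∘ a⁺₁`, `A⁺₂ = K ∘ a⁺₂ + (h/2)(A⁺₁ − 2 a⁺₁ ∘ J₀)`,
`Ã₁ = B ∘ a₂`, `Ã₂ = −K ∘ a₁ + (h/2)(Ã₁ − 2 a₂ ∘ J₀)`
satisfy `[A⁺₁,A⁺₂] = h (A⁺₁)²`, `[Ã₁,Ã₂] = h Ã₁²`, `[Ã₁,A⁺₁] = 0`,
`[Ã₂,A⁺₂] = h(1 − A⁺₁Ã₂ + A⁺₂Ã₁ + h A⁺₁Ã₁)`, and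
`[Ã₁,A⁺₂] = −[Ã₂,A⁺₁] = 1 + h A⁺₁Ã₁`. -/
theorem aizawa_realization_h_bosonic (h : ℝ)
    (B : Module.End ℝ (MvPolynomial (Fin 2) ℝ))
    (hBK : B * K h = 1) (hKB : K h * B = 1) :
    let Ap1 := B * aplus 0
    let Ap2 := K h * aplus 1 + (h / 2) • (Ap1 - (2 : ℝ) • (aplus 0 * Jzero))
    let At1 := B * aop 1
    let At2 := -(K h * aop 0) + (h / 2) • (At1 - (2 : ℝ) • (aop 1 * Jzero))
    Ap1 * Ap2 - Ap2 * Ap1 = h • (Ap1 * Ap1) ∧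
    At1 * At2 - At2 * At1 = h • (At1 * At1) ∧
    At1 * Ap1 - Ap1 * At1 = 0 ∧
    At2 * Ap2 - Ap2 * At2 = h • (1 - Ap1 * At2 + Ap2 * At1 + h • (Ap1 * At1)) ∧
    At1 * Ap2 - Ap2 * At1 = 1 + h • (Ap1 * At1) ∧
    -(At2 * Ap1 - Ap1 * At2) = 1 + h • (Ap1 * At1) := by
  simp only [two_smul_mul_Jzero]
  exact aizawa_realization_h_bosonic_general (K := ⟨K h, B, hKB, hBK⟩)
    (mul_div_cancel₀ h two_ne_zero).symm twoModeCCR_aplus_aop rfl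
end
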